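/- arXiv:2309.05377 — 4 statements merged into one kernel-verified Lean document; each statement's English description precedes it below -/
import Mathlib

section
/- Let n ≥ 2 be even and let f : ℝ^n → ℝ be any truthful deterministic mechanism in the unit-length model. Then the approximation ratio of f is at least 2 − 2/n: for every ε > 0 there exist a profile s ∈ ℝ^n and a position c ∈ ℝ such that Σ_{i=1}^n min(1, |c − s_i|) > 0 and Σ_{i=1}^n min(1, |f(s) − s_i|) ≥ (2 − 2/n − ε) · Σ_{i=1}^n min(1, |c − s_i|). -/
/-- A deterministic mechanism `f` is truthful in the unit-length TIC model if no
agent `i` can decrease her cost `min 1 |f s - s i|` by misreporting. -/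
def Truthful {n : ℕ} (f : (Fin n → ℝ) → ℝ) : Prop :=
  ∀ (s : Fin n → ℝ) (i : Fin n) (s' : ℝ),
    min 1 |f s - s i| ≤ min 1 |f (Function.update s i s') - s i|

/-- Agents at distance at least one from the outcome cannot, by moving together, bring it
within distance one of their position. -/
lemma group_move {n : ℕ} (f : (Fin n → ℝ) → ℝ) (hf : Truthful f) (a : ℝ) (S : Finset (Fin n)) :
    ∀ s s' : Fin n → ℝ, (∀ i ∈ S, s i = a) → (∀ i, i ∉ S → s' i = s i) →
      1 ≤ |f s - a| → 1 ≤ |f s' - a| := by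
  induction S using Finset.induction_on with
  | empty =>
    intro s s' _ h2 h3
    have : s' = s := funext fun i => h2 i (by simp)
    rw [this]; exact h3
  | insert j S hj ih =>
    intro s s' h1 h2 h3
    have hja : s j = a := h1 j (by simp)
    refine ih (Function.update s j (s' j)) s' ?_ ?_ ?_
    · intro i hi
      have hij : i ≠ j := fun h => hj (h ▸ hi)
      rw [Function.update_of_ne hij]
      exact h1 i (by simp [hi])
    · intro i hi
      by_cases hij : i = j
      · subst hij; simp
      · rw [Function.update_of_ne hij]
        exact h2 i (by simp [hi, hij])
    · have := hf s j (s' j)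
      rw [hja, min_eq_left h3] at this
      exact le_trans this (min_le_right _ _)

lemma slide {n : ℕ} (f : (Fin n → ℝ) → ℝ) (hf : Truthful f) (S : Finset (Fin n))
    (p : ℝ → Fin n → ℝ) (hp1 : ∀ x, ∀ i ∈ S, p x i = x)
    (hp2 : ∀ x y, ∀ i, i ∉ S → p x i = p y i) (w η : ℝ) (hη : 0 < η)
    (hfact : ∀ x, |f (p x) - x| < 1 - η ∨ |f (p x) - w| < 1 - η)
    (x₀ x₁ : ℝ) (hsep : ∀ r : ℝ, 0 ≤ r → r ≤ 1 → 2 ≤ |x₀ + r * (x₁ - x₀) - w|)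
    (h0 : |f (p x₀) - w| < 1 - η) : |f (p x₁) - w| < 1 - η := by
  obtain ⟨N, hN⟩ := exists_nat_gt (|x₁ - x₀| / η)
  have hNpos : (0 : ℝ) < N := lt_of_le_of_lt (by positivity) hN
  have hstep : |x₁ - x₀| / N ≤ η := by
    rw [div_lt_iff₀ hη] at hN
    rw [div_le_iff₀ hNpos]; linarith
  have key : ∀ j : ℕ, j ≤ N →
      |f (p (x₀ + (j / N : ℝ) * (x₁ - x₀))) - w| < 1 - η := by
    intro j
    induction j with
    | zero => intro _; simpa using h0
    | succ j ih =>
      intro hj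
      have hc := ih (by omega)
      set x := x₀ + (j / N : ℝ) * (x₁ - x₀) with hx
      set y := x₀ + ((j + 1 : ℕ) / N : ℝ) * (x₁ - x₀) with hy
      have hxw : 2 ≤ |x - w| := by
        apply hsep
        · positivity
        · rw [div_le_one hNpos]; exact_mod_cast (by omega : j ≤ N)
      have hfar : 1 ≤ |f (p x) - x| := by
        have := abs_sub_le x (f (p x)) w
        rw [abs_sub_comm x (f (p x))] at this
        linarith
      have hfar' : 1 ≤ |f (p y) - x| :=
        group_move f hf x S (p x) (p y) (hp1 x) (fun i hi => hp2 _ _ i hi) hfar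
      have hxy : |y - x| ≤ η := by
        have : y - x = (x₁ - x₀) / N := by
          rw [hx, hy]; push_cast; field_simp; ring
        rw [this, abs_div, abs_of_pos hNpos]; exact hstep
      rcases hfact y with h | h
      · exfalso
        have := abs_sub_le (f (p y)) y x
        linarith
      · exact h
  have := key N le_rfl
  rw [div_self hNpos.ne'] at this
  simpa using this

/-- The three-cluster profile. -/
noncomputable def prof (n k : ℕ) (a t b : ℝ) : Fin n → ℝ :=
  fun i => if i.val < k then a else if i.val = k then t else b

/-- Every deterministic truthful mechanism for the unit-length Truthful Interval
Covering problem with an even number `n ≥ 2` of agents has approximation ratio at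
least `2 - 2/n`: for every `ε > 0` there is a profile `s` and a position `c` with
positive social cost such that the social cost of the mechanism is at least
`(2 - 2/n - ε)` times the social cost of `c`. -/
theorem deterministic_lower_bound (n : ℕ) (hn : 2 ≤ n) (hev : Even n)
    (f : (Fin n → ℝ) → ℝ) (hf : Truthful f) (ε : ℝ) (hε : 0 < ε) :
    ∃ (s : Fin n → ℝ) (c : ℝ),
      0 < (∑ i, min 1 |c - s i|) ∧
      (2 - 2 / (n : ℝ) - ε) * (∑ i, min 1 |c - s i|) ≤ ∑ i, min 1 |f s - s i| := by
  by_contra hcon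
  push Not at hcon
  obtain ⟨m, hm⟩ := hev
  have hm1 : 1 ≤ m := by omega
  have hmR : (1 : ℝ) ≤ m := by exact_mod_cast hm1
  have hnR : (n : ℝ) = 2 * m := by rw [hm]; push_cast; ring
  set δ := min ε 1 with hδ
  have hδ0 : 0 < δ := lt_min hε one_pos
  have hδ1 : δ ≤ 1 := min_le_right _ _
  have hδε : δ ≤ ε := min_le_left _ _
  have hnn : ∀ (s : Fin n → ℝ) (c : ℝ), 0 ≤ ∑ i, min 1 |c - s i| := fun s c =>
    Finset.sum_nonneg fun i _ => le_min zero_le_one (abs_nonneg _)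
  have h2n : 2 / (n : ℝ) = 1 / m := by rw [hnR]; field_simp
  have hinv : 1 / (m : ℝ) ≤ 1 := by rw [div_le_one (by linarith)]; exact hmR
  -- uniform bound
  have bound0 : ∀ (s : Fin n → ℝ) (c : ℝ), 0 < (∑ i, min 1 |c - s i|) →
      (∑ i, min 1 |c - s i|) ≤ m → (∑ i, min 1 |f s - s i|) < 2 * m - 1 - δ * m := by
    intro s c h0 hle
    have h1 := hcon s c h0
    rw [h2n] at h1
    set S := ∑ i, min 1 |c - s i|
    have h3 : (2 - 1 / (m : ℝ) - ε) * S ≤ (2 - 1 / (m : ℝ) - δ) * S :=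
      mul_le_mul_of_nonneg_right (by linarith) h0.le
    have h4 : (2 - 1 / (m : ℝ) - δ) * S ≤ (2 - 1 / (m : ℝ) - δ) * m :=
      mul_le_mul_of_nonneg_left hle (by linarith)
    have h5 : (2 - 1 / (m : ℝ) - δ) * m = 2 * m - 1 - δ * m := by
      field_simp
    linarith
  have bound : ∀ (s : Fin n → ℝ) (c : ℝ),
      (∑ i, min 1 |c - s i|) ≤ m → (∑ i, min 1 |f s - s i|) < 2 * m - 1 - δ * m := by
    intro s c hle
    rcases (hnn s c).lt_or_eq with h | h
    · exact bound0 s c h hle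
    · have hz : ∀ i, s i = c := by
        intro i
        have := (Finset.sum_eq_zero_iff_of_nonneg
          (fun i _ => le_min zero_le_one (abs_nonneg (c - s i)))).1 h.symm i (Finset.mem_univ i)
        rcases min_choice 1 |c - s i| with h' | h'
        · rw [h'] at this; norm_num at this
        · rw [h', abs_eq_zero] at this; linarith
      have hsum : (∑ i, min 1 |c + 1 / 2 - s i|) = m := by
        have : ∀ i, min 1 |c + 1 / 2 - s i| = 1 / 2 := by
          intro i
          rw [hz i, add_sub_cancel_left, abs_of_pos (by norm_num)]
          norm_num
        simp only [this]
        simp [hnR]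
        ring
      exact bound0 s (c + 1 / 2) (by rw [hsum]; linarith) hsum.le
  set η := δ / 2 with hη
  have hη0 : 0 < η := by positivity
  have fact1 : ∀ k < n, ∀ a t b : ℝ, |f (prof n k a t b) - a| < 1 - η ∨
      |f (prof n k a t b) - b| < 1 - η := by
    intro k hk a t b
    by_contra hno
    push Not at hno
    obtain ⟨ha, hb⟩ := hno
    set s := prof n k a t b with hs
    have hup : (∑ i, min 1 |f s - s i|) < 2 * m - 1 - δ * m := by
      by_cases hkm : m ≤ k
      · apply bound s a
        calc (∑ i, min 1 |a - s i|) ≤ ∑ i : Fin n, (if i.val < k then (0 : ℝ) else 1) := by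
              apply Finset.sum_le_sum
              intro i _
              split_ifs with h
              · simp [hs, prof, h]
              · exact min_le_left _ _
          _ = ∑ i ∈ Finset.range n, (if i < k then (0 : ℝ) else 1) :=
              Fin.sum_univ_eq_sum_range (fun i => if i < k then (0 : ℝ) else 1) n
          _ ≤ m := by
              rw [← Nat.add_sub_of_le hk.le, Finset.sum_range_add,
                Finset.sum_eq_zero (fun i hi => by simp [Finset.mem_range.1 hi])]
              simp only [not_lt.2 (Nat.le_add_right k _), if_false]
              simp
              exact_mod_cast (by omega : n ≤ m + k)
      · apply bound s b
        calc (∑ i, min 1 |b - s i|) ≤ ∑ i : Fin n, (if i.val < k + 1 then (1 : ℝ) else 0) := by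
              apply Finset.sum_le_sum
              intro i _
              split_ifs with h
              · exact min_le_left _ _
              · have h1 : ¬ i.val < k := by omega
                have h2 : ¬ i.val = k := by omega
                simp [hs, prof, h1, h2]
          _ = ∑ i ∈ Finset.range n, (if i < k + 1 then (1 : ℝ) else 0) :=
              Fin.sum_univ_eq_sum_range (fun i => if i < k + 1 then (1 : ℝ) else 0) n
          _ ≤ m := by
              rw [← Nat.add_sub_of_le (Nat.succ_le_of_lt hk), Finset.sum_range_add,
                Finset.sum_congr rfl (fun i hi => if_pos (Finset.mem_range.1 hi))]
              simp only [not_lt.2 (Nat.le_add_right (k + 1) _), if_false]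
              simp
              exact_mod_cast (by omega : k + 1 ≤ m)
    have hlow : (n - 1 : ℝ) * (1 - η) ≤ ∑ i, min 1 |f s - s i| := by
      rw [← Finset.add_sum_erase _ _ (Finset.mem_univ (⟨k, hk⟩ : Fin n))]
      have h1 : ∑ i ∈ Finset.univ.erase (⟨k, hk⟩ : Fin n), (1 - η) ≤
          ∑ i ∈ Finset.univ.erase (⟨k, hk⟩ : Fin n), min 1 |f s - s i| := by
        apply Finset.sum_le_sum
        intro i hi
        have hik : ¬ i.val = k := fun h => (Finset.ne_of_mem_erase hi) (Fin.ext h)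
        apply le_min (by linarith)
        by_cases h : i.val < k
        · have : s i = a := by simp [hs, prof, h]
          rw [this]; exact ha
        · have : s i = b := by simp [hs, prof, h, hik]
          rw [this]; exact hb
      rw [Finset.sum_const, Finset.card_erase_of_mem (Finset.mem_univ _), Finset.card_univ,
        Fintype.card_fin, nsmul_eq_mul, Nat.cast_sub (by omega)] at h1
      have h2 : 0 ≤ min 1 |f s - s ⟨k, hk⟩| := le_min zero_le_one (abs_nonneg _)
      push_cast at h1
      linarith
    rw [hnR] at hlow
    have : δ = 2 * η := by rw [hη]; ring
    rw [this] at hup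
    nlinarith
  -- moving the left cluster while the right one is served
  have moveA : ∀ k < n, ∀ t b a a' : ℝ, a ≤ a' → a' + 2 ≤ b →
      |f (prof n k a t b) - b| < 1 - η → |f (prof n k a' t b) - b| < 1 - η := by
    intro k hk t b a a' haa hab h
    refine slide f hf (Finset.univ.filter fun i : Fin n => i.val < k)
      (fun x => prof n k x t b) ?_ ?_ b η hη0 (fun x => fact1 k hk x t b) a a' ?_ h
    · intro x i hi
      have : i.val < k := by simpa using hi
      simp [prof, this]
    · intro x y i hi
      have : ¬ i.val < k := by simpa using hi
      simp [prof, this]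
    · intro r hr0 hr1
      rw [abs_sub_comm]
      refine le_trans ?_ (le_abs_self _)
      nlinarith
  have moveB : ∀ k < n, ∀ t a b b' : ℝ, b' ≤ b → a + 2 ≤ b' →
      |f (prof n k a t b) - a| < 1 - η → |f (prof n k a t b') - a| < 1 - η := by
    intro k hk t a b b' hbb hab h
    refine slide f hf (Finset.univ.filter fun i : Fin n => k < i.val)
      (fun x => prof n k a t x) ?_ ?_ a η hη0 (fun x => (fact1 k hk a t x).symm) b b' ?_ h
    · intro x i hi
      have : k < i.val := by simpa using hi
      have h1 : ¬ i.val < k := by omega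
      have h2 : ¬ i.val = k := by omega
      simp [prof, h1, h2]
    · intro x y i hi
      have : ¬ k < i.val := by simpa using hi
      by_cases h1 : i.val < k
      · simp [prof, h1]
      · have h2 : i.val = k := by omega
        simp [prof, h2]
    · intro r hr0 hr1
      refine le_trans ?_ (le_abs_self _)
      nlinarith
  have excl : ∀ z a b : ℝ, a + 2 ≤ b → |z - a| < 1 - η → |z - b| < 1 - η → False := by
    intro z a b hab h1 h2
    have := (abs_lt.1 h1).2
    have := (abs_lt.1 h2).1
    linarith
  have chain : ∀ k < n, |f (prof n k (2 * k) (2 * k + 2) (2 * k + 2)) - (2 * k + 2)| < 1 - η := by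
    intro k
    induction k with
    | zero =>
      intro hk
      set z := f (prof n 0 (2 * (0 : ℕ)) (2 * (0 : ℕ) + 2) (2 * (0 : ℕ) + 2)) with hz
      have hsame : prof n 0 (z + 5) (2 * (0 : ℕ) + 2) (2 * (0 : ℕ) + 2) =
          prof n 0 (2 * (0 : ℕ)) (2 * (0 : ℕ) + 2) (2 * (0 : ℕ) + 2) := by
        funext i; simp [prof]
      have := fact1 0 hk (z + 5) (2 * (0 : ℕ) + 2) (2 * (0 : ℕ) + 2)
      rw [hsame, ← hz] at this
      rcases this with h | h
      · exfalso
        have := (abs_lt.1 h).1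
        linarith
      · exact h
    | succ k ih =>
      intro hk
      have hk' : k < n := by omega
      have h0 := ih hk'
      have h1 : |f (prof n k (2 * k) (2 * k + 2) (2 * k + 4)) - (2 * k + 4)| < 1 - η := by
        rcases fact1 k hk' (2 * k) (2 * k + 2) (2 * k + 4) with h | h
        · exact (excl _ _ _ le_rfl (moveB k hk' _ _ _ (2 * k + 2) (by linarith) le_rfl h) h0).elim
        · exact h
      have h2 := moveA k hk' _ _ _ (2 * k + 2) (by linarith) (by linarith) h1
      have hsame : prof n (k + 1) (2 * ((k + 1 : ℕ) : ℝ)) (2 * ((k + 1 : ℕ) : ℝ) + 2)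
          (2 * ((k + 1 : ℕ) : ℝ) + 2) = prof n k (2 * k + 2) (2 * k + 2) (2 * k + 4) := by
        have e1 : 2 * ((k + 1 : ℕ) : ℝ) = 2 * k + 2 := by push_cast; ring
        rw [e1]
        funext i
        simp only [prof]
        split_ifs <;> first | rfl | omega | ring
      rw [hsame]
      have e2 : 2 * ((k + 1 : ℕ) : ℝ) + 2 = 2 * k + 4 := by push_cast; ring
      rw [e2]; exact h2
  have hlast : n - 1 < n := by omega
  have hc := chain (n - 1) hlast
  set a : ℝ := 2 * ((n - 1 : ℕ) : ℝ)
  set z := f (prof n (n - 1) a (a + 2) (a + 2)) with hz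
  have hsame : prof n (n - 1) a (a + 2) (z + 5) = prof n (n - 1) a (a + 2) (a + 2) := by
    funext i
    have := i.isLt
    simp only [prof]
    split_ifs <;> first | rfl | omega
  have := fact1 (n - 1) hlast a (a + 2) (z + 5)
  rw [hsame, ← hz] at this
  rcases this with h | h
  · exact excl _ _ _ le_rfl h hc
  · have := (abs_lt.1 h).1
    linarith
end

section
/- Let n ≥ 6 be divisible by 6 and let s ∈ ℝ^n be a profile in the unit-length model. Let ℓ = o_{n/3}(s), m = o_{n/2}(s), and r = o_{2n/3}(s) be the (n/3)-th, (n/2)-th, and (2n/3)-th smallest entries of s, respectively. Then for every c ∈ ℝ, (1/3)·(SC_s(ℓ) + SC_s(m) + SC_s(r)) ≤ (5/3) · SC_s(c), where SC_s(x) = Σ_{i=1}^n min(1, |x − s_i|); that is, the Uniform-Statistic mechanism, which places the covering interval at each of ℓ, m, r with probability 1/3, has approximation ratio at most 5/3 for the expected social cost. -/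
/-- The `k`-th ordered statistic (0-indexed) of a profile `s` of left endpoints. -/
noncomputable def oStat {n : ℕ} (s : Fin n → ℝ) (k : Fin n) : ℝ :=
  s (Tuple.sort s k)

/-- truncated absolute value -/
noncomputable def tAbs (x : ℝ) : ℝ := min 1 |x|

lemma tAbs_le_one (x : ℝ) : tAbs x ≤ 1 := min_le_left _ _

lemma tAbs_nonneg (x : ℝ) : 0 ≤ tAbs x := le_min zero_le_one (abs_nonneg x)

lemma tAbs_neg (x : ℝ) : tAbs (-x) = tAbs x := by simp [tAbs]

lemma tAbs_sub_comm (x y : ℝ) : tAbs (x - y) = tAbs (y - x) := by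
  simp [tAbs, abs_sub_comm]

lemma tAbs_sub_le (x y : ℝ) : tAbs (x - y) ≤ tAbs x + tAbs y := by
  unfold tAbs
  have h := abs_sub x y
  have hx := abs_nonneg x
  have hy := abs_nonneg y
  rcases le_total 1 |x| with h1 | h1 <;> rcases le_total 1 |y| with h2 | h2 <;>
    simp only [min_eq_left, min_eq_right, h1, h2] <;>
    first
    | exact (min_le_left _ _).trans (by linarith)
    | exact (min_le_right _ _).trans (by linarith)

lemma tAbs_eq_self {x : ℝ} (h0 : 0 ≤ x) (h1 : x ≤ 1) : tAbs x = x := by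
  rw [tAbs, abs_of_nonneg h0, min_eq_right h1]

lemma tAbs_eq_one {x : ℝ} (h1 : 1 ≤ x) : tAbs x = 1 := by
  rw [tAbs, abs_of_nonneg (by linarith), min_eq_left h1]

lemma tAbs_mono {x y : ℝ} (h0 : 0 ≤ x) (h1 : x ≤ y) : tAbs x ≤ tAbs y := by
  rw [tAbs, tAbs, abs_of_nonneg h0, abs_of_nonneg (h0.trans h1)]
  exact min_le_min_left _ h1

/-- For `0 ≤ y ≤ x ≤ 1`. -/
lemma tAbs_sub_eq {x y : ℝ} (h0 : 0 ≤ y) (h1 : y ≤ x) (h2 : x ≤ 1) :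
    tAbs (y - x) = tAbs x - tAbs y := by
  rw [tAbs_sub_comm, tAbs_eq_self (by linarith) (by linarith), tAbs_eq_self (by linarith) h2,
    tAbs_eq_self h0 (by linarith)]

/-- For `0 ≤ y ≤ x`. -/
lemma tAbs_sub_le_left {x y : ℝ} (h0 : 0 ≤ y) (h1 : y ≤ x) :
    tAbs (x - y) ≤ tAbs x := tAbs_mono (by linarith) (by linarith)

/-- Excess of a point at `s`. -/
noncomputable def gEx (l m r s : ℝ) : ℝ :=
  tAbs (l - s) + tAbs (m - s) + tAbs (r - s) - 5 * tAbs s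

lemma gEx_neg (l m r s : ℝ) : gEx (-r) (-m) (-l) (-s) = gEx l m r s := by
  unfold gEx
  rw [tAbs_neg s, ← tAbs_neg (l - s), ← tAbs_neg (m - s), ← tAbs_neg (r - s)]
  ring_nf

lemma gEx_far {l m r s : ℝ} (h : tAbs s = 1) : gEx l m r s ≤ -2 := by
  unfold gEx
  linarith [tAbs_le_one (l - s), tAbs_le_one (m - s), tAbs_le_one (r - s)]

lemma gEx_any (l m r s : ℝ) : gEx l m r s ≤ tAbs l + tAbs m + tAbs r := by
  unfold gEx
  linarith [tAbs_sub_le l s, tAbs_sub_le m s, tAbs_sub_le r s, tAbs_nonneg s]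

/-- block-wise bounds -/
def Blocks (l m r : ℝ) : Prop :=
  ∃ G₁ G₂ G₃ G₄ : ℝ, 2 * G₁ + G₂ + G₃ + 2 * G₄ ≤ 0 ∧
    (∀ s, s ≤ l → gEx l m r s ≤ G₁) ∧
    (∀ s, l ≤ s → s ≤ m → gEx l m r s ≤ G₂) ∧
    (∀ s, m ≤ s → s ≤ r → gEx l m r s ≤ G₃) ∧
    (∀ s, r ≤ s → gEx l m r s ≤ G₄)

lemma blocks_case1 {l m r : ℝ} (h0 : 0 ≤ l) (h1 : l ≤ m) (h2 : m ≤ r) : Blocks l m r := by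
  have ha := tAbs_nonneg l
  have hab := tAbs_mono h0 h1
  have hbe := tAbs_mono (h0.trans h1) h2
  have he := tAbs_le_one r
  have B1 : ∀ s, s ≤ l → gEx l m r s ≤ tAbs l + tAbs m + tAbs r := fun s _ => gEx_any _ _ _ _
  have B2 : ∀ s, l ≤ s → s ≤ m → s ≤ 1 → gEx l m r s ≤ tAbs m + tAbs r - 5 * tAbs l := by
    intro s hl hm hs
    have := tAbs_sub_eq h0 hl hs
    have := tAbs_sub_le_left (h0.trans hl) hm
    have := tAbs_sub_le_left (h0.trans hl) (hm.trans h2)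
    have := tAbs_mono h0 hl
    unfold gEx
    linarith
  have B3 : ∀ s, m ≤ s → s ≤ r → s ≤ 1 → gEx l m r s ≤ tAbs r - tAbs l - 4 * tAbs m := by
    intro s hm hr hs
    have := tAbs_sub_eq h0 (h1.trans hm) hs
    have := tAbs_sub_eq (h0.trans h1) hm hs
    have := tAbs_sub_le_left (h0.trans (h1.trans hm)) hr
    have := tAbs_mono (h0.trans h1) hm
    unfold gEx
    linarith
  have B4 : ∀ s, r ≤ s → s ≤ 1 → gEx l m r s ≤ - tAbs l - tAbs m - 3 * tAbs r := by
    intro s hr hs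
    have := tAbs_sub_eq h0 (h1.trans (h2.trans hr)) hs
    have := tAbs_sub_eq (h0.trans h1) (h2.trans hr) hs
    have := tAbs_sub_eq (h0.trans (h1.trans h2)) hr hs
    have := tAbs_mono (h0.trans (h1.trans h2)) hr
    unfold gEx
    linarith
  have F : ∀ s, 1 ≤ s → gEx l m r s ≤ -2 := fun s hs => gEx_far (tAbs_eq_one hs)
  have BB4 : ∀ s, r ≤ s → gEx l m r s ≤ max (- tAbs l - tAbs m - 3 * tAbs r) (-2) := by
    intro s hr
    rcases le_total s 1 with hs | hs
    · exact le_max_of_le_left (B4 s hr hs)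
    · exact le_max_of_le_right (F s hs)
  rcases le_total r 1 with hr1 | hr1
  · refine ⟨_, _, _, _, ?_, B1, fun s a b => B2 s a b (by linarith),
      fun s a b => B3 s a b (by linarith), BB4⟩
    rcases max_choice (- tAbs l - tAbs m - 3 * tAbs r) (-2) with h | h <;> rw [h] <;> linarith
  have er := tAbs_eq_one hr1
  have BB3 : ∀ s, m ≤ s → s ≤ r → gEx l m r s ≤ max (tAbs r - tAbs l - 4 * tAbs m) (-2) := by
    intro s hm hr
    rcases le_total s 1 with hs | hs
    · exact le_max_of_le_left (B3 s hm hr hs)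
    · exact le_max_of_le_right (F s hs)
  rcases le_total m 1 with hm1 | hm1
  · refine ⟨_, _, _, _, ?_, B1, fun s a b => B2 s a b (by linarith),
      BB3, fun s a => F s (by linarith)⟩
    rcases max_choice (tAbs r - tAbs l - 4 * tAbs m) (-2) with h | h <;> rw [h] <;> linarith
  have em := tAbs_eq_one hm1
  have BB2 : ∀ s, l ≤ s → s ≤ m → gEx l m r s ≤ max (tAbs m + tAbs r - 5 * tAbs l) (-2) := by
    intro s hm hr
    rcases le_total s 1 with hs | hs
    · exact le_max_of_le_left (B2 s hm hr hs)
    · exact le_max_of_le_right (F s hs)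
  refine ⟨_, _, _, _, ?_, B1, BB2, fun s a b => F s (by linarith), fun s a => F s (by linarith)⟩
  rcases max_choice (tAbs m + tAbs r - 5 * tAbs l) (-2) with h | h <;> rw [h] <;> linarith

lemma blocks_case2 {l m r : ℝ} (h0 : l ≤ 0) (h1 : 0 ≤ m) (h2 : m ≤ r) : Blocks l m r := by
  have ha := tAbs_nonneg l
  have ha1 := tAbs_le_one l
  have hb := tAbs_nonneg m
  have hbe := tAbs_mono h1 h2
  have he := tAbs_le_one r
  have B1 : ∀ s, s ≤ l → gEx l m r s ≤ max (tAbs m + tAbs r - 3 * tAbs l) (-2) := by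
    intro s hl
    rcases le_total (-s) 1 with hs | hs
    · apply le_max_of_le_left
      have e := tAbs_sub_eq (x := -s) (y := -l) (by linarith) (by linarith) hs
      have e2 : tAbs (-l - -s) = tAbs (l - s) := by rw [← tAbs_neg]; ring_nf
      have e3 := tAbs_mono (x := -l) (y := -s) (by linarith) (by linarith)
      rw [tAbs_neg, tAbs_neg] at e3
      rw [e2, tAbs_neg, tAbs_neg] at e
      have := tAbs_sub_le m s
      have := tAbs_sub_le r s
      unfold gEx
      linarith
    · apply le_max_of_le_right
      apply gEx_far
      rw [← tAbs_neg]
      exact tAbs_eq_one hs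
  have B2 : ∀ s, l ≤ s → s ≤ m → gEx l m r s ≤ tAbs l + tAbs m + tAbs r :=
    fun s _ _ => gEx_any _ _ _ _
  have B3 : ∀ s, m ≤ s → s ≤ r → s ≤ 1 → gEx l m r s ≤ tAbs l + tAbs r - 4 * tAbs m := by
    intro s hm hr hs
    have := tAbs_sub_le l s
    have := tAbs_sub_eq h1 hm hs
    have := tAbs_sub_le_left (h1.trans hm) hr
    have := tAbs_mono h1 hm
    unfold gEx
    linarith
  have B4 : ∀ s, r ≤ s → s ≤ 1 → gEx l m r s ≤ tAbs l - tAbs m - 3 * tAbs r := by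
    intro s hr hs
    have := tAbs_sub_le l s
    have := tAbs_sub_eq h1 (h2.trans hr) hs
    have := tAbs_sub_eq (h1.trans h2) hr hs
    have := tAbs_mono (h1.trans h2) hr
    unfold gEx
    linarith
  have F : ∀ s, 1 ≤ s → gEx l m r s ≤ -2 := fun s hs => gEx_far (tAbs_eq_one hs)
  have BB4 : ∀ s, r ≤ s → gEx l m r s ≤ max (tAbs l - tAbs m - 3 * tAbs r) (-2) := by
    intro s hr
    rcases le_total s 1 with hs | hs
    · exact le_max_of_le_left (B4 s hr hs)
    · exact le_max_of_le_right (F s hs)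
  rcases le_total r 1 with hr1 | hr1
  · refine ⟨_, _, _, _, ?_, B1, B2, fun s a b => B3 s a b (by linarith), BB4⟩
    rcases max_choice (tAbs l - tAbs m - 3 * tAbs r) (-2) with h | h <;> rw [h] <;>
    rcases max_choice (tAbs m + tAbs r - 3 * tAbs l) (-2) with hh | hh <;> rw [hh] <;> linarith
  have er := tAbs_eq_one hr1
  have BB3 : ∀ s, m ≤ s → s ≤ r → gEx l m r s ≤ max (tAbs l + tAbs r - 4 * tAbs m) (-2) := by
    intro s hm hr
    rcases le_total s 1 with hs | hs
    · exact le_max_of_le_left (B3 s hm hr hs)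
    · exact le_max_of_le_right (F s hs)
  refine ⟨_, _, _, _, ?_, B1, B2, BB3, fun s a => F s (by linarith)⟩
  rcases max_choice (tAbs l + tAbs r - 4 * tAbs m) (-2) with h | h <;> rw [h] <;>
  rcases max_choice (tAbs m + tAbs r - 3 * tAbs l) (-2) with hh | hh <;> rw [hh] <;> linarith

lemma blocks_of_nonneg {l m r : ℝ} (h0 : 0 ≤ m) (h1 : l ≤ m) (h2 : m ≤ r) : Blocks l m r := by
  rcases le_total 0 l with h | h
  · exact blocks_case1 h h1 h2
  · exact blocks_case2 h h0 h2

lemma blocks_all {l m r : ℝ} (h1 : l ≤ m) (h2 : m ≤ r) : Blocks l m r := by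
  rcases le_total 0 m with h | h
  · exact blocks_of_nonneg h h1 h2
  · obtain ⟨G₁, G₂, G₃, G₄, hs, b1, b2, b3, b4⟩ :=
      blocks_of_nonneg (l := -r) (m := -m) (r := -l) (by linarith) (by linarith) (by linarith)
    refine ⟨G₄, G₃, G₂, G₁, by linarith, fun s a => ?_, fun s a b => ?_, fun s a b => ?_,
      fun s a => ?_⟩ <;> rw [← gEx_neg]
    · exact b4 _ (by linarith)
    · exact b3 _ (by linarith) (by linarith)
    · exact b2 _ (by linarith) (by linarith)
    · exact b1 _ (by linarith)

lemma sum_step (n j : ℕ) (hj : j ≤ n) (v : ℝ) :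
    ∑ k : Fin n, (if (k : ℕ) < j then v else 0) = j * v := by
  rw [Fin.sum_univ_eq_sum_range (fun k => if k < j then v else 0) n, ← Finset.sum_filter]
  have : (Finset.range n).filter (fun k => k < j) = Finset.range j := by
    ext k; simp; omega
  rw [this]; simp

/-- The Uniform-Statistic mechanism, which places the covering interval at each of
the `(n/3)`-th, `(n/2)`-th and `(2n/3)`-th smallest reports with probability `1/3`,
has approximation ratio at most `5/3` for the expected social cost in the
unit-length Truthful Interval Covering model. -/
theorem uniform_statistic_approx (n : ℕ) (hn : 6 ≤ n) (hd : 6 ∣ n)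
    (s : Fin n → ℝ) (c : ℝ) :
    (1 / 3 : ℝ) *
        ((∑ i, min 1 |oStat s ⟨n / 3 - 1, by omega⟩ - s i|) +
          (∑ i, min 1 |oStat s ⟨n / 2 - 1, by omega⟩ - s i|) +
          (∑ i, min 1 |oStat s ⟨2 * n / 3 - 1, by omega⟩ - s i|)) ≤
      (5 / 3 : ℝ) * ∑ i, min 1 |c - s i| := by
  have hmono : ∀ i j : Fin n, i ≤ j → oStat s i ≤ oStat s j :=
    fun i j h => Tuple.monotone_sort s h
  set L := oStat s ⟨n / 3 - 1, by omega⟩ with hL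
  set M := oStat s ⟨n / 2 - 1, by omega⟩ with hM
  set R := oStat s ⟨2 * n / 3 - 1, by omega⟩ with hR
  have hLM : L ≤ M := hmono _ _ (by simp only [Fin.mk_le_mk]; omega)
  have hMR : M ≤ R := hmono _ _ (by simp only [Fin.mk_le_mk]; omega)
  obtain ⟨G₁, G₂, G₃, G₄, hG, b1, b2, b3, b4⟩ :=
    blocks_all (l := L - c) (m := M - c) (r := R - c) (by linarith) (by linarith)
  obtain ⟨q, rfl⟩ := hd
  have key : ∑ i, gEx (L - c) (M - c) (R - c) (s i - c) ≤ 0 := by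
    rw [← Equiv.sum_comp (Tuple.sort s)]
    calc ∑ k, gEx (L - c) (M - c) (R - c) (s (Tuple.sort s k) - c)
        ≤ ∑ k : Fin (6 * q), (G₄ + (if (k : ℕ) < 4 * q then G₃ - G₄ else 0)
          + (if (k : ℕ) < 3 * q then G₂ - G₃ else 0)
          + (if (k : ℕ) < 2 * q then G₁ - G₂ else 0)) := by
          apply Finset.sum_le_sum
          intro k _
          change gEx (L - c) (M - c) (R - c) (oStat s k - c) ≤ _
          by_cases k2 : (k : ℕ) < 2 * q
          · rw [if_pos (by omega), if_pos (by omega), if_pos k2]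
            have : oStat s k ≤ L := hmono _ _ (by rw [Fin.le_def]; simp only; omega)
            linarith [b1 (oStat s k - c) (by linarith)]
          have e1 : L ≤ oStat s k := hmono _ _ (by rw [Fin.le_def]; simp only; omega)
          by_cases k3 : (k : ℕ) < 3 * q
          · rw [if_pos (by omega), if_pos k3, if_neg k2]
            have : oStat s k ≤ M := hmono _ _ (by rw [Fin.le_def]; simp only; omega)
            linarith [b2 (oStat s k - c) (by linarith) (by linarith)]
          have e2 : M ≤ oStat s k := hmono _ _ (by rw [Fin.le_def]; simp only; omega)
          by_cases k4 : (k : ℕ) < 4 * q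
          · rw [if_pos k4, if_neg k3, if_neg k2]
            have : oStat s k ≤ R := hmono _ _ (by rw [Fin.le_def]; simp only; omega)
            linarith [b3 (oStat s k - c) (by linarith) (by linarith)]
          have e3 : R ≤ oStat s k := hmono _ _ (by rw [Fin.le_def]; simp only; omega)
          rw [if_neg k4, if_neg k3, if_neg k2]
          linarith [b4 (oStat s k - c) (by linarith)]
      _ = q * (2 * G₁ + G₂ + G₃ + 2 * G₄) := by
          rw [Finset.sum_add_distrib, Finset.sum_add_distrib, Finset.sum_add_distrib,
            sum_step _ _ (by omega), sum_step _ _ (by omega), sum_step _ _ (by omega)]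
          simp
          ring
      _ ≤ 0 := mul_nonpos_of_nonneg_of_nonpos (Nat.cast_nonneg q) hG
  have hconv : ∑ i, gEx (L - c) (M - c) (R - c) (s i - c) =
      (∑ i, min 1 |L - s i|) + (∑ i, min 1 |M - s i|) + (∑ i, min 1 |R - s i|)
        - 5 * ∑ i, min 1 |c - s i| := by
    rw [Finset.mul_sum, ← Finset.sum_add_distrib, ← Finset.sum_add_distrib,
      ← Finset.sum_sub_distrib]
    apply Finset.sum_congr rfl
    intro i _
    unfold gEx tAbs
    rw [sub_sub_sub_cancel_right, sub_sub_sub_cancel_right, sub_sub_sub_cancel_right,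
      abs_sub_comm c]
  linarith
end

section
/- Let n ≥ 6 be divisible by 6, let s ∈ ℝ^n be a profile in the unit-length model, and let ℓ = o_{n/3}(s), m = o_{n/2}(s), r = o_{2n/3}(s). If c ∈ ℝ is a position whose covering interval has empty intersection with both the interval of the (n/3)-th agent and the interval of the (2n/3)-th agent, i.e., |c − ℓ| ≥ 1 and |c − r| ≥ 1, then (1/3)·(SC_s(ℓ) + SC_s(m) + SC_s(r)) ≤ (3/2) · SC_s(c). In particular, if the optimal covering interval intersects neither of these two agents' intervals, the Uniform-Statistic mechanism is at most 3/2-approximate on that instance. -/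
theorem oStat_sum_lower {n : ℕ} (s : Fin n → ℝ) (c : ℝ) (T : Finset (Fin n))
    (hT : ∀ j ∈ T, 1 ≤ |c - oStat s j|) : (T.card : ℝ) ≤ ∑ i, min 1 |c - s i| := by
  rw [← Equiv.sum_comp (Tuple.sort s) (fun i => min 1 |c - s i|)]
  calc (T.card : ℝ) = ∑ j ∈ T, (1 : ℝ) := by simp
    _ ≤ ∑ j ∈ T, min 1 |c - s (Tuple.sort s j)| :=
        Finset.sum_le_sum fun j hj => le_min le_rfl (hT j hj)
    _ ≤ _ := Finset.sum_le_sum_of_subset_of_nonneg (Finset.subset_univ _)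
        fun j _ _ => le_min zero_le_one (abs_nonneg _)

theorem sum_min_upper {n : ℕ} (s : Fin n → ℝ) (c : ℝ) :
    ∑ i, min 1 |c - s i| ≤ (n : ℝ) := by
  calc ∑ i, min 1 |c - s i| ≤ ∑ _i : Fin n, (1 : ℝ) :=
        Finset.sum_le_sum fun i _ => min_le_left _ _
    _ = n := by simp

theorem oStat_mono {n : ℕ} (s : Fin n → ℝ) : Monotone (oStat s) := Tuple.monotone_sort s

theorem exists_far_set {n : ℕ} (s : Fin n → ℝ) (c : ℝ) (a b : Fin n) (hab : a < b)
    (hl : 1 ≤ |c - oStat s a|) (hr : 1 ≤ |c - oStat s b|) (k : ℕ)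
    (ha : (a : ℕ) + 1 = 2 * k) (hb : (b : ℕ) + 1 = 4 * k) (hk : n = 6 * k) :
    ∃ T : Finset (Fin n), 4 * k ≤ T.card ∧ ∀ j ∈ T, 1 ≤ |c - oStat s j| := by
  have hm := oStat_mono s
  rcases le_abs.1 hr with hr' | hr'
  · refine ⟨Finset.Iic b, by rw [Fin.card_Iic]; omega, fun j hj => ?_⟩
    have := hm (Finset.mem_Iic.1 hj)
    exact le_abs.2 (Or.inl (by linarith))
  rcases le_abs.1 hl with hl' | hl'
  · refine ⟨Finset.Iic a ∪ Finset.Ici b, ?_, fun j hj => ?_⟩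
    · rw [Finset.card_union_of_disjoint, Fin.card_Iic, Fin.card_Ici]
      · omega
      · rw [Finset.disjoint_left]
        intro j h1 h2
        exact absurd ((Finset.mem_Ici.1 h2).trans (Finset.mem_Iic.1 h1)) (not_le.2 hab)
    · rcases Finset.mem_union.1 hj with h | h
      · have := hm (Finset.mem_Iic.1 h)
        exact le_abs.2 (Or.inl (by linarith))
      · have := hm (Finset.mem_Ici.1 h)
        exact le_abs.2 (Or.inr (by linarith))
  · refine ⟨Finset.Ici a, by rw [Fin.card_Ici]; omega, fun j hj => ?_⟩
    have := hm (Finset.mem_Ici.1 hj)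
    exact le_abs.2 (Or.inr (by linarith))

/-- If a position `c` is such that the covering interval `[c, c+1]` has empty
intersection with both the interval of the `(n/3)`-th agent and the interval of the
`(2n/3)`-th agent (i.e. `|c - ℓ| ≥ 1` and `|c - r| ≥ 1`), then the expected social
cost of the Uniform-Statistic mechanism is at most `3/2` times the social cost of
`c`. -/
theorem uniform_statistic_no_intersection (n : ℕ) (hn : 6 ≤ n) (hd : 6 ∣ n)
    (s : Fin n → ℝ) (c : ℝ)
    (hl : 1 ≤ |c - oStat s ⟨n / 3 - 1, by omega⟩|)
    (hr : 1 ≤ |c - oStat s ⟨2 * n / 3 - 1, by omega⟩|) :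
    (1 / 3 : ℝ) *
        ((∑ i, min 1 |oStat s ⟨n / 3 - 1, by omega⟩ - s i|) +
          (∑ i, min 1 |oStat s ⟨n / 2 - 1, by omega⟩ - s i|) +
          (∑ i, min 1 |oStat s ⟨2 * n / 3 - 1, by omega⟩ - s i|)) ≤
      (3 / 2 : ℝ) * ∑ i, min 1 |c - s i| := by
  obtain ⟨k, hk⟩ := hd
  obtain ⟨T, hT, hT'⟩ := exists_far_set s c _ _ (by rw [Fin.mk_lt_mk]; omega) hl hr k
    (by simp only; omega) (by simp only; omega) hk
  have h0 := oStat_sum_lower s c T hT'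
  have h1 := sum_min_upper s (oStat s ⟨n / 3 - 1, by omega⟩)
  have h2 := sum_min_upper s (oStat s ⟨n / 2 - 1, by omega⟩)
  have h3 := sum_min_upper s (oStat s ⟨2 * n / 3 - 1, by omega⟩)
  have h4 : (4 : ℝ) * k ≤ T.card := by exact_mod_cast hT
  have h5 : (n : ℝ) = 6 * k := by exact_mod_cast hk
  linarith
end

section
/- Let n ≥ 2 be even and let s ∈ ℝ^n be a profile in the unit-length model. Define the social welfare of a position c as SW_s(c) = Σ_{i=1}^n max(0, 1 − |c − s_i|) (the total covered length of the agents' intervals), and let m = o_{n/2}(s) be the (n/2)-th smallest entry of s. Then for every c ∈ ℝ, SW_s(c) ≤ (n/2) · SW_s(m); that is, the Median mechanism achieves approximation ratio at most n/2 for the social welfare objective. -/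
lemma tic_aux {n : ℕ} (h : ℕ) (hh : 1 ≤ h) (hn : n = 2 * h) (u g : Fin n → ℝ) (d : ℝ)
    (A : Finset (Fin n)) (hA : A.card = h) (j : Fin n) (hj : j ∈ A) (hgj : g j = 1)
    (hg : ∀ i, 0 ≤ g i) (h1 : ∀ i ∈ A, u i ≤ 1 - d) (h2 : ∀ i, i ∉ A → u i ≤ d + g i) :
    ∑ i, u i ≤ ((n : ℝ) / 2) * ∑ i, g i := by
  classical
  have hB : (Aᶜ).card = h := by
    rw [Finset.card_compl, Fintype.card_fin]; omega
  rw [← Finset.sum_add_sum_compl A u, ← Finset.sum_add_sum_compl A g]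
  have e1 : ∑ i ∈ A, u i ≤ h * (1 - d) := by
    have := Finset.sum_le_card_nsmul A u (1 - d) h1
    rwa [hA, nsmul_eq_mul] at this
  have e2 : ∑ i ∈ Aᶜ, u i ≤ h * d + ∑ i ∈ Aᶜ, g i := by
    have : ∑ i ∈ Aᶜ, u i ≤ ∑ i ∈ Aᶜ, (d + g i) :=
      Finset.sum_le_sum fun i hi => h2 i (Finset.mem_compl.1 hi)
    rwa [Finset.sum_add_distrib, Finset.sum_const, hB, nsmul_eq_mul] at this
  have e3 : 1 ≤ ∑ i ∈ A, g i := by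
    rw [← hgj]; exact Finset.single_le_sum (fun i _ => hg i) hj
  have e4 : 0 ≤ ∑ i ∈ Aᶜ, g i := Finset.sum_nonneg fun i _ => hg i
  have e5 : (n : ℝ) / 2 = h := by rw [hn]; push_cast; ring
  have e6 : (1 : ℝ) ≤ h := by exact_mod_cast hh
  rw [e5]
  nlinarith

/-- In the unit-length Truthful Interval Covering model with social welfare
`SW_s(c) = ∑ i, max 0 (1 - |c - s i|)` (total covered length), the Median
mechanism achieves an approximation ratio of at most `n/2`: for every position `c`,
`SW_s(c) ≤ (n/2) · SW_s(m)` where `m` is the `(n/2)`-th smallest report. -/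
theorem median_welfare_approx (n : ℕ) (hn : 2 ≤ n) (hev : Even n)
    (s : Fin n → ℝ) (c : ℝ) :
    (∑ i, max 0 (1 - |c - s i|)) ≤
      ((n : ℝ) / 2) * ∑ i, max 0 (1 - |oStat s ⟨n / 2 - 1, by omega⟩ - s i|) := by
  obtain ⟨h, hh⟩ := hev
  have hmono : Monotone (s ∘ Tuple.sort s) := Tuple.monotone_sort s
  rw [← Equiv.sum_comp (Tuple.sort s) (fun i => max 0 (1 - |c - s i|)),
    ← Equiv.sum_comp (Tuple.sort s)
      (fun i => max 0 (1 - |oStat s ⟨n / 2 - 1, by omega⟩ - s i|))]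
  unfold oStat
  set x : Fin n → ℝ := fun i => s (Tuple.sort s i) with hx
  have hm : ∀ a b : Fin n, a ≤ b → x a ≤ x b := fun a b hab => hmono hab
  set j : Fin n := ⟨n / 2 - 1, by omega⟩ with hj
  have hjv : (j : ℕ) = h - 1 := by simp only [hj]; omega
  change (∑ i, max 0 (1 - |c - x i|)) ≤ ((n : ℝ) / 2) * ∑ i, max 0 (1 - |x j - x i|)
  rcases le_or_gt (x j) c with hc | hc
  · refine tic_aux h (by omega) (by omega) _ _ (min 1 (c - x j)) (Finset.Iic j) ?_ j
      (by simp) (by simp) (fun i => le_max_left _ _) ?_ ?_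
    · rw [Fin.card_Iic]; omega
    · intro i hi
      have := hm i j (Finset.mem_Iic.1 hi)
      grind
    · intro i hi
      have := hm j i (by simp at hi; exact hi.le)
      grind
  · set k : Fin n := ⟨h, by omega⟩ with hk
    have hkj : j ≠ k := by intro e; have := congrArg Fin.val e; simp [hk] at this; omega
    have hjk : j ≤ k := by rw [Fin.le_def]; simp [hk]; omega
    refine tic_aux h (by omega) (by omega) _ _ (min 1 (x j - c)) ((Finset.Ici j).erase k) ?_ j
      (by simp [hkj]) (by simp) (fun i => le_max_left _ _) ?_ ?_
    · rw [Finset.card_erase_of_mem (by simpa using hjk), Fin.card_Ici]; omega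
    · intro i hi
      have := hm j i (by simp at hi; exact hi.2)
      grind
    · intro i hi
      by_cases hik : i = k
      · have := hm j i (hik ▸ hjk)
        clear hi
        grind
      · have := hm i j (by simp [hik] at hi; exact hi.le)
        grind
end
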